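/- arXiv:0912.0855 — 2 statements merged into one kernel-verified Lean document; each statement's English description precedes it below -/
import Mathlib

section
/- Let 𝔤 be a finite-dimensional real Lie algebra and let k ≥ 1 be an odd integer. Define the k-linear form w_k on 𝔤 by w_k(x_1,…,x_k) := ∑_{σ ∈ S_k} sgn(σ) · trace(ad x_{σ(1)} ∘ ⋯ ∘ ad x_{σ(k)}). Then w_k is a Chevalley–Eilenberg cocycle: for all x_1, …, x_{k+1} ∈ 𝔤, ∑_{1 ≤ i < j ≤ k+1} (−1)^{i+j} · w_k([x_i, x_j], x_1, …, x̂_i, …, x̂_j, …, x_{k+1}) = 0, where x̂_i and x̂_j indicate that the arguments x_i and x_j are omitted and the bracket [x_i, x_j] is inserted as the first argument. -/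
/-- The `k`-linear form `w_k(x_1,…,x_k) = ∑_{σ ∈ S_k} sgn σ · tr (ad x_{σ(1)} ∘ ⋯ ∘ ad x_{σ(k)})`
on a real Lie algebra. -/
noncomputable def altAdTraceForm (L : Type*) [LieRing L] [LieAlgebra ℝ L]
    {k : ℕ} (y : Fin k → L) : ℝ :=
  ∑ σ : Equiv.Perm (Fin k),
    ((Equiv.Perm.sign σ : ℤ) : ℝ) *
      LinearMap.trace ℝ L ((List.ofFn fun i => LieAlgebra.ad ℝ L (y (σ i))).prod)

/-!
Let `s_n` be the standard polynomial `s_n(a_1, …, a_n) = ∑_σ sgn σ · a_{σ(1)} ⋯ a_{σ(n)}` of an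
associative ring, and let `T` be an additive map with `T (a * b) = T (b * a)`. Rotating each word
until its first letter is `a_1` gives
`T (s_{n+1}(a_1, …, a_{n+1})) = (∑_{q ≤ n} (-1)^{nq}) · T (a_1 · s_n(a_2, …, a_{n+1}))`,
so `T ∘ s_{n+1}` vanishes for odd `n` and is `(n + 1) · T (a_1 · s_n(a_2, …, a_{n+1}))` for even
`n`. Expanding `s_{n+2}` along its first two letters and pairing the words that begin with
`a_i a_j` and `a_j a_i` shows that the Chevalley–Eilenberg coboundary of `a_1 · s_n(a_2, …)` is
`-s_{n+2}`. For even `n` the coboundary of `T ∘ s_{n+1}` is therefore `-(n + 1) · T ∘ s_{n+2} = 0`.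
-/

open Equiv Finset

section FinIndices

variable {M : Type*} [AddCommMonoid M] {n : ℕ}

theorem sum_perm_fin_succ (g : Fin (n + 1) → Perm (Fin (n + 1))) (hg : ∀ p, g p 0 = p)
    (f : Perm (Fin (n + 1)) → M) :
    ∑ σ, f σ = ∑ p, ∑ e : Perm (Fin n), f (g p * Perm.decomposeFin.symm (0, e)) := by
  let Φ (pe : Fin (n + 1) × Perm (Fin n)) := g pe.1 * Perm.decomposeFin.symm (0, pe.2)
  have Φ_zero (pe) : Φ pe 0 = pe.1 := by simp [Φ, hg]
  have Φ_injective : Function.Injective Φ := by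
    rintro ⟨p, e⟩ ⟨q, e'⟩ h
    obtain rfl : p = q := by simpa only [Φ_zero] using congr($h 0)
    simpa [Φ] using h
  have Φ_bijective : Function.Bijective Φ :=
    (Fintype.bijective_iff_injective_and_card Φ).2
      ⟨Φ_injective, by simp [Fintype.card_perm, Nat.factorial_succ]⟩
  rw [← Fintype.sum_prod_type']
  exact (Fintype.sum_bijective Φ Φ_bijective _ _ fun _ ↦ rfl).symm

theorem sum_perm_fin_succ_mul_inv (g : Fin (n + 1) → Perm (Fin (n + 1))) (hg : ∀ p, g p 0 = p)
    (f : Perm (Fin (n + 1)) → M) :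
    ∑ σ, f σ = ∑ p, ∑ e : Perm (Fin n), f (Perm.decomposeFin.symm (0, e) * (g p)⁻¹) := by
  have decomposeFin_symm_inv (e : Perm (Fin n)) :
      (Perm.decomposeFin.symm (0, e))⁻¹ = Perm.decomposeFin.symm (0, e⁻¹) := by
    refine inv_eq_of_mul_eq_one_right (Equiv.ext fun i ↦ ?_)
    cases i using Fin.cases <;> simp
  rw [← Equiv.sum_comp (Equiv.inv _), sum_perm_fin_succ g hg]
  refine sum_congr rfl fun p _ ↦ ?_
  rw [← Equiv.sum_comp (Equiv.inv _)]
  simp [mul_inv_rev, decomposeFin_symm_inv]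

theorem finRotate_pow_apply_zero (p : Fin (n + 1)) : (finRotate (n + 1) ^ (p : ℕ)) 0 = p := by
  rw [Perm.coe_pow, ← finCycle_eq_finRotate_iterate, finCycle_apply, zero_add]

theorem sum_sum_eq_sum_lt_pred_add_castPred (F : Fin (n + 1) → Fin n → M) :
    ∑ p, ∑ q, F p q = ∑ i, ∑ j, if h : i < j then
      F i (j.pred (Fin.ne_zero_of_lt h)) + F j (i.castPred (Fin.ne_last_of_lt h)) else 0 := by
  let f (i : Fin (n + 1)) : Fin (n + 1) → M := i.insertNth 0 (F i)
  have f_of_lt {i j : Fin (n + 1)} (h : i < j) : f i j = F i (j.pred (Fin.ne_zero_of_lt h)) := by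
    simp [f, Fin.insertNth_apply_above h]
  have f_of_gt {i j : Fin (n + 1)} (h : i < j) :
      f j i = F j (i.castPred (Fin.ne_last_of_lt h)) := by
    simp [f, Fin.insertNth_apply_below h]
  calc
    ∑ p, ∑ q, F p q = ∑ i, ∑ j ∈ {i}ᶜ, f i j := by
      refine sum_congr rfl fun i _ ↦ ?_
      have sum_insertNth : ∑ j, f i j = ∑ q, F i q := by
        simp [Fin.sum_univ_succAbove _ i, f]
      rw [← sum_insertNth, Fintype.sum_eq_add_sum_compl i]
      simp [f]
    _ = ∑ i, ∑ j ∈ Ioi i, (f i j + f j i) :=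
      (sum_sum_Ioi_add_eq_sum_sum_off_diag fun i j ↦ f j i).symm
    _ = _ := by
      refine sum_congr rfl fun i _ ↦ ?_
      rw [← filter_lt_eq_Ioi, sum_filter]
      refine sum_congr rfl fun j _ ↦ ?_
      split_ifs with h
      · rw [f_of_lt h, f_of_gt h]
      · rfl

theorem removeNth_pred_removeNth {α : Type*} (a : Fin (n + 2) → α) {i j : Fin (n + 2)}
    (h : i < j) : (j.pred (Fin.ne_zero_of_lt h)).removeNth (i.removeNth a) =
      (i.castPred (Fin.ne_last_of_lt h)).removeNth (j.removeNth a) := by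
  rw [Fin.removeNth_removeNth_eq_swap, Fin.predAbove_pred_of_lt _ _ h,
    Fin.succAbove_pred_of_lt _ _ h]

end FinIndices

section Rotation

variable {A N : Type*} [Monoid A] (T : A → N) (hT : ∀ a b, T (a * b) = T (b * a)) {n : ℕ}
include hT

theorem map_prod_ofFn_finRotate (a : Fin (n + 1) → A) :
    T (List.ofFn fun i ↦ a (finRotate (n + 1) i)).prod = T (List.ofFn a).prod := by
  rw [List.ofFn_succ', List.ofFn_succ (f := a)]
  simp [List.prod_append, hT (a 0)]

theorem map_prod_ofFn_finRotate_pow (a : Fin (n + 1) → A) (q : ℕ) :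
    T (List.ofFn fun i ↦ a ((finRotate (n + 1) ^ q) i)).prod = T (List.ofFn a).prod := by
  induction q with
  | zero => simp
  | succ q ih =>
    rw [← ih, ← map_prod_ofFn_finRotate T hT fun i ↦ a ((finRotate (n + 1) ^ q) i)]
    simp only [pow_succ, Perm.mul_apply]

end Rotation

section StandardPolynomial

variable {A : Type*} [Ring A] {n : ℕ}

/-- The standard polynomial `s_n(a_1, …, a_n) = ∑_{σ ∈ S_n} sgn σ · a_{σ(1)} ⋯ a_{σ(n)}` of a
possibly noncommutative ring. -/
def standardPolynomial (a : Fin n → A) : A :=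
  ∑ σ : Perm (Fin n), Perm.sign σ • (List.ofFn fun i ↦ a (σ i)).prod

theorem standardPolynomial_succ (a : Fin (n + 1) → A) :
    standardPolynomial a =
      ∑ p : Fin (n + 1), (-1 : ℤ) ^ (p : ℕ) • (a p * standardPolynomial (p.removeNth a)) := by
  simp only [standardPolynomial,
    sum_perm_fin_succ (fun p ↦ p.cycleRange.symm) Fin.cycleRange_symm_zero, mul_sum, smul_sum]
  refine sum_congr rfl fun p _ ↦ sum_congr rfl fun e _ ↦ ?_
  simp [-zsmul_eq_mul, List.ofFn_succ, Fin.removeNth, Units.smul_def, mul_smul]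

section Trace

variable {N : Type*} [AddCommGroup N] (T : A →+ N) (hT : ∀ a b, T (a * b) = T (b * a))
include hT

theorem map_standardPolynomial_succ (a : Fin (n + 1) → A) :
    T (standardPolynomial a) =
      (∑ q : Fin (n + 1), ((-1 : ℤ) ^ n) ^ (q : ℕ)) •
        T (a 0 * standardPolynomial (Fin.tail a)) := by
  have map_prod_mul_inv (σ : Perm (Fin (n + 1))) (q : ℕ) :
      T (List.ofFn fun i ↦ a ((σ * (finRotate (n + 1) ^ q)⁻¹) i)).prod =
        T (List.ofFn fun i ↦ a (σ i)).prod := by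
    rw [← map_prod_ofFn_finRotate_pow T hT _ q]
    simp
  simp only [standardPolynomial, map_sum, Units.smul_def, map_zsmul,
    sum_perm_fin_succ_mul_inv (fun p ↦ finRotate (n + 1) ^ (p : ℕ)) finRotate_pow_apply_zero,
    map_prod_mul_inv, mul_sum, smul_sum, sum_smul]
  rw [sum_comm]
  refine sum_congr rfl fun e _ ↦ sum_congr rfl fun q _ ↦ ?_
  simp [-zsmul_eq_mul, List.ofFn_succ, Fin.tail, mul_smul, smul_comm (Perm.sign e : ℤ)]

theorem map_standardPolynomial_succ_of_odd (hn : Odd n) (a : Fin (n + 1) → A) :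
    T (standardPolynomial a) = 0 := by
  rw [map_standardPolynomial_succ T hT, hn.neg_one_pow, Fin.sum_neg_one_pow,
    if_pos hn.add_one, zero_smul]

theorem map_standardPolynomial_succ_of_even (hn : Even n) (a : Fin (n + 1) → A) :
    T (standardPolynomial a) = (n + 1) • T (a 0 * standardPolynomial (Fin.tail a)) := by
  rw [map_standardPolynomial_succ T hT, hn.neg_one_pow]
  simp [← natCast_zsmul]

end Trace

end StandardPolynomial

section LieCoboundary

variable {L L' M N : Type*} [LieRing L] [LieRing L'] [AddCommGroup M] [AddCommGroup N] {n : ℕ}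

/-- The Chevalley–Eilenberg coboundary (with trivial coefficients)
`∑_{i<j} (-1)^{i+j} w([x_i, x_j], x_0, …, x̂_i, …, x̂_j, …)` of a cochain `w`. Cochains are
arbitrary functions here, since the formula makes sense without multilinearity. -/
def lieCoboundary (w : (Fin (n + 1) → L) → M) (x : Fin (n + 2) → L) : M :=
  ∑ i : Fin (n + 2), ∑ j : Fin (n + 2), if h : i < j then
    (-1 : ℤ) ^ ((i : ℕ) + (j : ℕ)) •
      w (Fin.cons ⁅x i, x j⁆ ((i.castPred (Fin.ne_last_of_lt h)).removeNth (j.removeNth x)))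
  else 0

theorem map_lieCoboundary (f : M →+ N) (w : (Fin (n + 1) → L) → M) (x : Fin (n + 2) → L) :
    f (lieCoboundary w x) = lieCoboundary (fun y ↦ f (w y)) x := by
  simp only [lieCoboundary, map_sum, apply_dite f, map_zsmul, map_zero]

theorem lieCoboundary_comp_lieHom {R : Type*} [CommRing R] [LieAlgebra R L] [LieAlgebra R L']
    (φ : L →ₗ⁅R⁆ L') (w : (Fin (n + 1) → L') → M) (x : Fin (n + 2) → L) :
    lieCoboundary (fun y ↦ w (φ ∘ y)) x = lieCoboundary w (φ ∘ x) := by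
  simp only [lieCoboundary, Fin.comp_cons, LieHom.map_lie]
  rfl

attribute [local instance] LieRing.ofAssociativeRing

theorem lieCoboundary_mul_standardPolynomial {A : Type*} [Ring A] (a : Fin (n + 2) → A) :
    lieCoboundary (fun b : Fin (n + 1) → A ↦ b 0 * standardPolynomial (Fin.tail b)) a =
      -standardPolynomial a := by
  let word (p : Fin (n + 2)) (q : Fin (n + 1)) : A :=
    (-1 : ℤ) ^ (p + q : ℕ) •
      (a p * (p.removeNth a q * standardPolynomial (q.removeNth (p.removeNth a))))
  have expansion : standardPolynomial a = ∑ p, ∑ q, word p q := by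
    simp only [standardPolynomial_succ, mul_sum, smul_sum, mul_smul_comm, smul_smul, pow_add, word]
  rw [expansion, sum_sum_eq_sum_lt_pred_add_castPred, lieCoboundary, ← sum_neg_distrib]
  refine sum_congr rfl fun i _ ↦ ?_
  rw [← sum_neg_distrib]
  refine sum_congr rfl fun j _ ↦ ?_
  split_ifs with h
  · have removeNth_pred : i.removeNth a (j.pred (Fin.ne_zero_of_lt h)) = a j := by
      rw [Fin.removeNth_apply, Fin.succAbove_pred_of_lt _ _ h]
    have removeNth_castPred : j.removeNth a (i.castPred (Fin.ne_last_of_lt h)) = a i := by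
      rw [Fin.removeNth_apply, Fin.succAbove_castPred_of_lt _ _ h]
    have sign_pred : (-1 : ℤ) ^ (i + j.pred (Fin.ne_zero_of_lt h) : ℕ) = -(-1) ^ (i + j : ℕ) := by
      rw [← Nat.sub_add_cancel (Nat.one_le_of_lt h), ← add_assoc, pow_succ]
      simp
    simp only [word, removeNth_pred_removeNth a h, removeNth_pred, removeNth_castPred, sign_pred,
      Fin.coe_castPred, add_comm (j : ℕ), Fin.cons_zero, Fin.tail_cons, Ring.lie_def, sub_mul,
      mul_assoc, smul_sub, neg_smul]
    abel
  · rw [neg_zero]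

theorem stmt_2_general {R A : Type*} [CommRing R] [LieAlgebra R L] [Ring A] [Algebra R A]
    (φ : L →ₗ⁅R⁆ A) (T : A →+ N) (hT : ∀ a b, T (a * b) = T (b * a))
    (m : ℕ) (x : Fin (2 * m + 2) → L) :
    lieCoboundary (fun y : Fin (2 * m + 1) → L ↦ T (standardPolynomial (φ ∘ y))) x = 0 := by
  let c : A →+ N := (2 * m + 1) • T
  calc
    _ = lieCoboundary (fun b : Fin (2 * m + 1) → A ↦ T (standardPolynomial b)) (φ ∘ x) :=
      lieCoboundary_comp_lieHom φ (fun b ↦ T (standardPolynomial b)) x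
    _ = lieCoboundary
          (fun b : Fin (2 * m + 1) → A ↦ c (b 0 * standardPolynomial (Fin.tail b))) (φ ∘ x) := by
      simp only [map_standardPolynomial_succ_of_even T hT (even_two_mul m)]
      rfl
    _ = -c (standardPolynomial (φ ∘ x)) := by
      rw [← map_lieCoboundary, lieCoboundary_mul_standardPolynomial, map_neg]
    _ = 0 := by
      simp [c, map_standardPolynomial_succ_of_odd T hT (odd_two_mul_add_one m)]

theorem altAdTraceForm_eq_trace_standardPolynomial (L : Type*) [LieRing L] [LieAlgebra ℝ L] {k : ℕ}
    (y : Fin k → L) :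
    altAdTraceForm L y = LinearMap.trace ℝ L (standardPolynomial (LieAlgebra.ad ℝ L ∘ y)) := by
  simp only [altAdTraceForm, standardPolynomial, map_sum, Units.smul_def,
    ← Int.cast_smul_eq_zsmul ℝ, map_smul, smul_eq_mul, Function.comp_apply]

end LieCoboundary

/-- For a finite-dimensional real Lie algebra `L` and odd `k = 2m+1 ≥ 1`, the form `w_k` is a
Chevalley–Eilenberg cocycle: for all `x_1, …, x_{k+1}`,
`∑_{i<j} (−1)^{i+j} w_k([x_i,x_j], x_1, …, x̂_i, …, x̂_j, …, x_{k+1}) = 0`.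
Here `Fin.cons` inserts the bracket as first argument and the double `succAbove`
enumerates the remaining arguments, omitting positions `i < j`. -/
theorem stmt_2 (L : Type*) [LieRing L] [LieAlgebra ℝ L] [FiniteDimensional ℝ L]
    (m : ℕ) (x : Fin (2 * m + 2) → L) :
    ∑ i : Fin (2 * m + 2), ∑ j : Fin (2 * m + 2),
      (if h : i < j then
        (-1 : ℝ) ^ ((i : ℕ) + (j : ℕ)) *
          altAdTraceForm L (Fin.cons ⁅x i, x j⁆
            (fun p : Fin (2 * m) =>
              x (j.succAbove ((Fin.castLT i
                (Nat.lt_of_lt_of_le h (Nat.lt_succ_iff.mp j.isLt))).succAbove p))))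
      else 0) = 0 := by
  have h := stmt_2_general (LieAlgebra.ad ℝ L) (LinearMap.trace ℝ L).toAddMonoidHom
    (LinearMap.trace_mul_comm ℝ) m x
  simp only [altAdTraceForm_eq_trace_standardPolynomial]
  simp only [lieCoboundary, zsmul_eq_mul, Int.cast_pow, Int.cast_neg, Int.cast_one] at h
  exact h
end

section
/- Let U ⊆ ℝⁿ be open and connected, and let ε : U × U → GL(n,ℝ) be a smooth map satisfying ε(x,x) = I and ε(y,z) · ε(x,y) = ε(x,z) for all x, y, z ∈ U, with Christoffel symbols Γ^i_{jk}(x) := [∂ε^i_k(x,y)/∂y^j]_{y=x}. For p ∈ U and v ∈ ℝⁿ let V_{p,v} : U → ℝⁿ denote the ε-invariant vector field V_{p,v}(x) := ε(p,x) · v. Then the following are equivalent: (i) the curvature R₂ vanishes on U, i.e. ∂Γ^i_{kj}/∂x^r + ∑_a Γ^a_{kr}Γ^i_{aj} − ∂Γ^i_{kr}/∂x^j − ∑_a Γ^a_{kj}Γ^i_{ar} = 0 for all indices and all x ∈ U; (ii) the ε-invariant vector fields are closed under the Lie bracket: for every p ∈ U and v, w ∈ ℝⁿ there exists u ∈ ℝⁿ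 such that the Lie bracket [V_{p,v}, V_{p,w}], with components ∑_a (V_{p,v}^a · ∂V_{p,w}^i/∂x^a − V_{p,w}^a · ∂V_{p,v}^i/∂x^a), equals V_{p,u} on U. -/
/-- The Christoffel symbols `Γ^i_{jk}(x) = [∂ε^i_k(x,y)/∂y^j]_{y=x}` of a splitting `ε`. -/
noncomputable def Gamma {n : ℕ}
    (ε : (Fin n → ℝ) → (Fin n → ℝ) → Matrix (Fin n) (Fin n) ℝ)
    (x : Fin n → ℝ) (i j k : Fin n) : ℝ :=
  fderiv ℝ (fun y => ε x y i k) x (Pi.single j 1)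

/-!
Write `Γ x h : E →L[𝕜] E` for the derivative of `ε x` at `x` in the direction `h`. Differentiating
`ε p y = ε x y ∘ ε p x` at `y = x` shows that invariant fields are the solutions of
`DZ(h) = Γ(h, Z)`, so the bracket of two of them is `T(V, W)`, where
`T(v, w) = Γ(v, w) - Γ(w, v)`. Hence `[V, W]` is invariant exactly when the derivative `∇T` of `T`
with respect to the parallelism vanishes on `V` and `W`. Symmetry of the second derivative of `ε p`
says that the connection `Γ` is flat, and flatness turns `∇T` into `R₂`.
-/

theorem fderiv_clm_apply_const_apply {𝕜 E F G : Type*} [NontriviallyNormedField 𝕜]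
    [NormedAddCommGroup E] [NormedSpace 𝕜 E] [NormedAddCommGroup F] [NormedSpace 𝕜 F]
    [NormedAddCommGroup G] [NormedSpace 𝕜 G] {f : E → F →L[𝕜] G} {x : E}
    (hf : DifferentiableAt 𝕜 f x) (v : F) (h : E) :
    fderiv 𝕜 (fun y => f y v) x h = fderiv 𝕜 f x h v := by
  rw [fderiv_clm_apply hf (differentiableAt_const v)]
  simp

section Parallelism

variable {𝕜 E : Type*} [NontriviallyNormedField 𝕜] [NormedAddCommGroup E] [NormedSpace 𝕜 E]

variable (𝕜) in
/-- A parallelism (splitting) of class `C²` on `U`: a transport `ε x y` from the tangent space at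
`x` to the tangent space at `y`, both identified with `E`. Only the values on `U × U` matter. -/
structure IsParallelismOn (ε : E → E → E →L[𝕜] E) (U : Set E) : Prop where
  contDiffOn : ContDiffOn 𝕜 2 (fun q : E × E => ε q.1 q.2) (U ×ˢ U)
  self_eq_id : ∀ x ∈ U, ε x x = ContinuousLinearMap.id 𝕜 E
  comp_eq : ∀ x ∈ U, ∀ y ∈ U, ∀ z ∈ U, ε y z ∘L ε x y = ε x z

/-- The Christoffel symbols of `ε` as a bilinear map: the first argument is the direction of
differentiation, so that `Γ^i_{jk}` is the `i`-th coordinate of the value at `e_j`, `e_k`. -/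
noncomputable def christoffelForm (ε : E → E → E →L[𝕜] E) (x : E) : E →L[𝕜] E →L[𝕜] E :=
  fderiv 𝕜 (ε x) x

/-- The torsion `T(v, w) = Γ(v, w) - Γ(w, v)`, up to sign the torsion of the connection whose
parallel fields are the invariant ones. -/
noncomputable def torsionForm (ε : E → E → E →L[𝕜] E) (x : E) : E →L[𝕜] E →L[𝕜] E :=
  christoffelForm ε x - (christoffelForm ε x).flip

/-- The trilinear map `(k, r, j) ↦ ∂_r Γ(k, j) + Γ(Γ(k, r), j)`, whose alternation in `r, j` is the
curvature `R₂`. -/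
noncomputable def preCurvatureForm (ε : E → E → E →L[𝕜] E) (x : E) :
    E →L[𝕜] E →L[𝕜] E →L[𝕜] E :=
  (fderiv 𝕜 (christoffelForm ε) x).flip +
    (ContinuousLinearMap.compL 𝕜 E E (E →L[𝕜] E) (christoffelForm ε x)) ∘L christoffelForm ε x

/-- The curvature `R₂` as a trilinear map with arguments in the order `k, r, j`. -/
noncomputable def curvatureForm (ε : E → E → E →L[𝕜] E) (x : E) :
    E →L[𝕜] E →L[𝕜] E →L[𝕜] E :=
  preCurvatureForm ε x -
    (ContinuousLinearMap.flipₗᵢ 𝕜 E E E).toContinuousLinearEquiv ∘L preCurvatureForm ε x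

theorem torsionForm_apply (ε : E → E → E →L[𝕜] E) (x v w : E) :
    torsionForm ε x v w = christoffelForm ε x v w - christoffelForm ε x w v :=
  rfl

theorem curvatureForm_apply (ε : E → E → E →L[𝕜] E) (x k r j : E) :
    curvatureForm ε x k r j =
      fderiv 𝕜 (christoffelForm ε) x r k j + christoffelForm ε x (christoffelForm ε x k r) j -
        (fderiv 𝕜 (christoffelForm ε) x j k r +
          christoffelForm ε x (christoffelForm ε x k j) r) :=
  rfl

namespace IsParallelismOn

variable {ε : E → E → E →L[𝕜] E} {U : Set E} {p x : E}

theorem apply_apply_symm (hε : IsParallelismOn 𝕜 ε U) (hp : p ∈ U) (hx : x ∈ U) (v : E) :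
    ε p x (ε x p v) = v := by
  rw [← ContinuousLinearMap.comp_apply, hε.comp_eq x hx p hp x hx, hε.self_eq_id x hx,
    ContinuousLinearMap.id_apply]

theorem contDiffAt_right (hε : IsParallelismOn 𝕜 ε U) (hU : IsOpen U) (hp : p ∈ U) (hx : x ∈ U) :
    ContDiffAt 𝕜 2 (ε p) x :=
  (hε.contDiffOn.contDiffAt ((hU.prod hU).mem_nhds (Set.mk_mem_prod hp hx))).comp x
    (contDiffAt_const.prodMk contDiffAt_id)

theorem differentiableAt_right (hε : IsParallelismOn 𝕜 ε U) (hU : IsOpen U) (hp : p ∈ U)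
    (hx : x ∈ U) : DifferentiableAt 𝕜 (ε p) x :=
  (hε.contDiffAt_right hU hp hx).differentiableAt two_ne_zero

theorem differentiableAt_left (hε : IsParallelismOn 𝕜 ε U) (hU : IsOpen U) (hp : p ∈ U)
    (hx : x ∈ U) : DifferentiableAt 𝕜 (fun y => ε y p) x :=
  ((hε.contDiffOn.contDiffAt ((hU.prod hU).mem_nhds (Set.mk_mem_prod hx hp))).comp x
    (contDiffAt_id.prodMk contDiffAt_const)).differentiableAt two_ne_zero

theorem fderiv_right_apply (hε : IsParallelismOn 𝕜 ε U) (hU : IsOpen U) (hp : p ∈ U) (hx : x ∈ U)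
    (h : E) : fderiv 𝕜 (ε p) x h = christoffelForm ε x h ∘L ε p x := by
  have hcomp : ε p =ᶠ[nhds x] fun y => ε x y ∘L ε p x := by
    filter_upwards [hU.mem_nhds hx] with y hy using (hε.comp_eq p hp x hx y hy).symm
  rw [hcomp.fderiv_eq, fderiv_clm_comp (hε.differentiableAt_right hU hx hx)
    (differentiableAt_const _)]
  simp [christoffelForm]

theorem differentiableAt_invariant (hε : IsParallelismOn 𝕜 ε U) (hU : IsOpen U) (hp : p ∈ U)
    (hx : x ∈ U) (v : E) : DifferentiableAt 𝕜 (fun y => ε p y v) x :=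
  (hε.differentiableAt_right hU hp hx).clm_apply (differentiableAt_const v)

theorem fderiv_invariant_apply (hε : IsParallelismOn 𝕜 ε U) (hU : IsOpen U) (hp : p ∈ U)
    (hx : x ∈ U) (v h : E) :
    fderiv 𝕜 (fun y => ε p y v) x h = christoffelForm ε x h (ε p x v) := by
  rw [fderiv_clm_apply_const_apply (hε.differentiableAt_right hU hp hx),
    hε.fderiv_right_apply hU hp hx, ContinuousLinearMap.comp_apply]

theorem christoffelForm_eq (hε : IsParallelismOn 𝕜 ε U) (hU : IsOpen U) (hp : p ∈ U) (hx : x ∈ U)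
    (h v : E) : christoffelForm ε x h v = fderiv 𝕜 (ε p) x h (ε x p v) := by
  rw [hε.fderiv_right_apply hU hp hx, ContinuousLinearMap.comp_apply,
    hε.apply_apply_symm hp hx]

theorem differentiableAt_fderiv_right (hε : IsParallelismOn 𝕜 ε U) (hU : IsOpen U)
    (hx : x ∈ U) : DifferentiableAt 𝕜 (fderiv 𝕜 (ε x)) x :=
  ((hε.contDiffAt_right hU hx hx).fderiv_right (m := 1) le_rfl).differentiableAt one_ne_zero

theorem differentiableAt_christoffelForm (hε : IsParallelismOn 𝕜 ε U) (hU : IsOpen U)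
    (hx : x ∈ U) : DifferentiableAt 𝕜 (christoffelForm ε) x := by
  have hformula : christoffelForm ε =ᶠ[nhds x] fun y =>
      ((ContinuousLinearMap.compL 𝕜 E E E).flip (ε y x)) ∘L fderiv 𝕜 (ε x) y := by
    filter_upwards [hU.mem_nhds hx] with y hy
    ext h v
    exact hε.christoffelForm_eq hU hx hy h v
  have hleft := hε.differentiableAt_left hU hx hx
  refine DifferentiableAt.congr_of_eventuallyEq ?_ hformula
  exact ((ContinuousLinearMap.differentiableAt _).comp x hleft).clm_comp
    (hε.differentiableAt_fderiv_right hU hx)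

theorem fderiv_fderiv_right_apply (hε : IsParallelismOn 𝕜 ε U) (hU : IsOpen U) (hx : x ∈ U)
    (r j v : E) :
    fderiv 𝕜 (fderiv 𝕜 (ε x)) x r j v =
      fderiv 𝕜 (christoffelForm ε) x r j v +
        christoffelForm ε x j (christoffelForm ε x r v) := by
  have hεx := hε.differentiableAt_right hU hx hx
  have hΓ := hε.differentiableAt_christoffelForm hU hx
  have hDε := hε.differentiableAt_fderiv_right hU hx
  have hformula : (fun y => fderiv 𝕜 (ε x) y j v) =ᶠ[nhds x]
      fun y => christoffelForm ε y j (ε x y v) := by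
    filter_upwards [hU.mem_nhds hx] with y hy
    rw [hε.fderiv_right_apply hU hx hy, ContinuousLinearMap.comp_apply]
  calc
    fderiv 𝕜 (fderiv 𝕜 (ε x)) x r j v = fderiv 𝕜 (fun y => fderiv 𝕜 (ε x) y j v) x r := by
      rw [fderiv_clm_apply_const_apply (hDε.clm_apply (differentiableAt_const j)),
        fderiv_clm_apply_const_apply hDε]
    _ = fderiv 𝕜 (fun y => christoffelForm ε y j (ε x y v)) x r := by rw [hformula.fderiv_eq]
    _ = _ := by
      rw [fderiv_clm_apply (hΓ.clm_apply (differentiableAt_const j))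
        (hεx.clm_apply (differentiableAt_const v))]
      simp [fderiv_clm_apply_const_apply hΓ, hε.fderiv_invariant_apply hU hx hx, hε.self_eq_id x hx,
        add_comm]

theorem fderiv_christoffelForm_add_symm [IsRCLikeNormedField 𝕜] (hε : IsParallelismOn 𝕜 ε U)
    (hU : IsOpen U) (hx : x ∈ U) (r j v : E) :
    fderiv 𝕜 (christoffelForm ε) x r j v + christoffelForm ε x j (christoffelForm ε x r v) =
      fderiv 𝕜 (christoffelForm ε) x j r v +
        christoffelForm ε x r (christoffelForm ε x j v) := by
  have hsymm : IsSymmSndFDerivAt 𝕜 (ε x) x :=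
    (hε.contDiffAt_right hU hx hx).isSymmSndFDerivAt (by simp)
  rw [← hε.fderiv_fderiv_right_apply hU hx, ← hε.fderiv_fderiv_right_apply hU hx, hsymm.eq]

theorem lieBracket_invariant (hε : IsParallelismOn 𝕜 ε U) (hU : IsOpen U) (hp : p ∈ U)
    (hx : x ∈ U) (v w : E) :
    VectorField.lieBracket 𝕜 (fun y => ε p y v) (fun y => ε p y w) x =
      torsionForm ε x (ε p x v) (ε p x w) := by
  rw [VectorField.lieBracket, hε.fderiv_invariant_apply hU hp hx,
    hε.fderiv_invariant_apply hU hp hx, torsionForm_apply]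

theorem exists_eq_invariant_iff [IsRCLikeNormedField 𝕜] (hε : IsParallelismOn 𝕜 ε U)
    (hU : IsOpen U) (hconn : IsPreconnected U) (hp : p ∈ U) {Z : E → E}
    (hZ : ∀ x ∈ U, DifferentiableAt 𝕜 Z x) :
    (∃ u, ∀ x ∈ U, Z x = ε p x u) ↔
      ∀ x ∈ U, ∀ h, fderiv 𝕜 Z x h = christoffelForm ε x h (Z x) := by
  constructor
  · rintro ⟨u, hu⟩ x hx h
    have hZu : Z =ᶠ[nhds x] fun y => ε p y u := by
      filter_upwards [hU.mem_nhds hx] with y hy using hu y hy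
    rw [hZu.fderiv_eq, hε.fderiv_invariant_apply hU hp hx, hu x hx]
  · intro hDZ
    let u : E → E := fun x => ε x p (Z x)
    have hεu : ∀ x ∈ U, ε p x (u x) = Z x := fun x hx => hε.apply_apply_symm hp hx (Z x)
    have hu : ∀ x ∈ U, DifferentiableAt 𝕜 u x := fun x hx =>
      (hε.differentiableAt_left hU hp hx).clm_apply (hZ x hx)
    have hDu : U.EqOn (fderiv 𝕜 u) 0 := by
      intro x hx
      ext h
      have hZu : Z =ᶠ[nhds x] fun y => ε p y (u y) := by
        filter_upwards [hU.mem_nhds hx] with y hy using (hεu y hy).symm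
      have hproduct : fderiv 𝕜 Z x h =
          ε p x (fderiv 𝕜 u x h) + christoffelForm ε x h (Z x) := by
        rw [hZu.fderiv_eq, fderiv_clm_apply (hε.differentiableAt_right hU hp hx) (hu x hx)]
        simp [hε.fderiv_right_apply hU hp hx, hεu x hx]
      rw [hDZ x hx, right_eq_add] at hproduct
      simpa [hε.apply_apply_symm hx hp] using congrArg (ε x p) hproduct
    let : RCLike 𝕜 := IsRCLikeNormedField.rclike 𝕜
    let : NormedSpace ℝ E := .restrictScalars ℝ 𝕜 E
    refine ⟨u p, fun x hx => ?_⟩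
    rw [← hU.is_const_of_fderiv_eq_zero hconn
      (fun y hy => (hu y hy).differentiableWithinAt) hDu hx hp, hεu x hx]

theorem differentiableAt_torsionForm (hε : IsParallelismOn 𝕜 ε U) (hU : IsOpen U) (hx : x ∈ U) :
    DifferentiableAt 𝕜 (torsionForm ε) x := by
  have hΓ := hε.differentiableAt_christoffelForm hU hx
  exact hΓ.sub ((ContinuousLinearMap.flipₗᵢ 𝕜 E E E).differentiableAt.comp x hΓ)

theorem fderiv_torsionForm_apply (hε : IsParallelismOn 𝕜 ε U) (hU : IsOpen U) (hx : x ∈ U)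
    (k v w : E) :
    fderiv 𝕜 (torsionForm ε) x k v w =
      fderiv 𝕜 (christoffelForm ε) x k v w - fderiv 𝕜 (christoffelForm ε) x k w v := by
  have hΓ := (hε.differentiableAt_christoffelForm hU hx).hasFDerivAt
  have hflip := (ContinuousLinearMap.flipₗᵢ 𝕜 E E E).toContinuousLinearEquiv.hasFDerivAt.comp x hΓ
  have hT : HasFDerivAt (torsionForm ε) _ x := hΓ.sub hflip
  rw [hT.fderiv]
  rfl

-- The left-hand side is `(∇_k T)(V, W)`, since `∇V = ∇W = 0`.
theorem fderiv_torsionForm_invariant_sub [IsRCLikeNormedField 𝕜] (hε : IsParallelismOn 𝕜 ε U)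
    (hU : IsOpen U) (hp : p ∈ U) (hx : x ∈ U) (v w k : E) :
    fderiv 𝕜 (fun y => torsionForm ε y (ε p y v) (ε p y w)) x k -
        christoffelForm ε x k (torsionForm ε x (ε p x v) (ε p x w)) =
      curvatureForm ε x k (ε p x v) (ε p x w) := by
  have hT := hε.differentiableAt_torsionForm hU hx
  have hV := hε.differentiableAt_invariant hU hp hx v
  have hW := hε.differentiableAt_invariant hU hp hx w
  have hflat_vw := hε.fderiv_christoffelForm_add_symm hU hx k (ε p x v) (ε p x w)
  have hflat_wv := hε.fderiv_christoffelForm_add_symm hU hx k (ε p x w) (ε p x v)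
  rw [fderiv_clm_apply (hT.clm_apply hV) hW, fderiv_clm_apply hT hV]
  simp only [add_apply, ContinuousLinearMap.comp_apply,
    ContinuousLinearMap.flip_apply, hε.fderiv_invariant_apply hU hp hx,
    hε.fderiv_torsionForm_apply hU hx, torsionForm_apply, curvatureForm_apply, map_sub]
  rw [eq_sub_of_add_eq hflat_vw, eq_sub_of_add_eq hflat_wv]
  abel

theorem exists_lieBracket_eq_invariant_iff [IsRCLikeNormedField 𝕜] (hε : IsParallelismOn 𝕜 ε U)
    (hU : IsOpen U) (hconn : IsPreconnected U) (hp : p ∈ U) (v w : E) :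
    (∃ u, ∀ x ∈ U,
        VectorField.lieBracket 𝕜 (fun y => ε p y v) (fun y => ε p y w) x = ε p x u) ↔
      ∀ x ∈ U, ∀ k, curvatureForm ε x k (ε p x v) (ε p x w) = 0 := by
  have hT : ∀ x ∈ U, DifferentiableAt 𝕜 (fun y => torsionForm ε y (ε p y v) (ε p y w)) x :=
    fun x hx => ((hε.differentiableAt_torsionForm hU hx).clm_apply
      (hε.differentiableAt_invariant hU hp hx v)).clm_apply
      (hε.differentiableAt_invariant hU hp hx w)
  calc
    _ ↔ ∃ u, ∀ x ∈ U, torsionForm ε x (ε p x v) (ε p x w) = ε p x u :=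
      exists_congr fun u => forall₂_congr fun x hx => by rw [hε.lieBracket_invariant hU hp hx]
    _ ↔ ∀ x ∈ U, ∀ k, fderiv 𝕜 (fun y => torsionForm ε y (ε p y v) (ε p y w)) x k =
          christoffelForm ε x k (torsionForm ε x (ε p x v) (ε p x w)) :=
      hε.exists_eq_invariant_iff hU hconn hp hT
    _ ↔ _ := by
      refine forall₂_congr fun x hx => forall_congr' fun k => ?_
      rw [← hε.fderiv_torsionForm_invariant_sub hU hp hx, sub_eq_zero]

end IsParallelismOn

theorem stmt_17_general [IsRCLikeNormedField 𝕜] {ε : E → E → E →L[𝕜] E} {U : Set E}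
    (hU : IsOpen U) (hconn : IsPreconnected U) (hε : IsParallelismOn 𝕜 ε U) :
    (∀ x ∈ U, curvatureForm ε x = 0) ↔
      ∀ p ∈ U, ∀ v w, ∃ u, ∀ x ∈ U,
        VectorField.lieBracket 𝕜 (fun y => ε p y v) (fun y => ε p y w) x = ε p x u := by
  constructor
  · intro hR p hp v w
    exact (hε.exists_lieBracket_eq_invariant_iff hU hconn hp v w).2 fun x hx k => by
      simp [hR x hx]
  · intro hbracket x hx
    ext k v w
    simpa [hε.self_eq_id x hx] using
      (hε.exists_lieBracket_eq_invariant_iff hU hconn hx v w).1 (hbracket x hx v w) x hx k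

end Parallelism

section Coordinates

theorem sum_mul_apply_single {R ι κ F : Type*} [Fintype ι] [DecidableEq ι] [CommSemiring R]
    [FunLike F (ι → R) (κ → R)] [LinearMapClass F R (ι → R) (κ → R)] (f : F) (v : ι → R) (i : κ) :
    ∑ a, v a * f (Pi.single a 1) i = f v i := by
  conv_rhs => rw [pi_eq_sum_univ' v]
  simp

theorem continuousLinearMap_pi_eq_zero_iff {R ι G : Type*} [Finite ι] [DecidableEq ι] [Semiring R]
    [TopologicalSpace R] [AddCommMonoid G] [Module R G] [TopologicalSpace G] {f : (ι → R) →L[R] G} :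
    f = 0 ↔ ∀ i, f (Pi.single i 1) = 0 := by
  refine ⟨fun hf i => by simp [hf], fun hf => ContinuousLinearMap.coe_injective ?_⟩
  exact LinearMap.pi_ext' fun i => LinearMap.ext_ring (hf i)

theorem lieBracket_apply_eq_sum {𝕜 ι : Type*} [NontriviallyNormedField 𝕜] [Fintype ι]
    [DecidableEq ι] {V W : (ι → 𝕜) → ι → 𝕜} {x : ι → 𝕜}
    (hV : DifferentiableAt 𝕜 V x) (hW : DifferentiableAt 𝕜 W x) (i : ι) :
    VectorField.lieBracket 𝕜 V W x i =
      ∑ a, (V x a * fderiv 𝕜 (fun y => W y i) x (Pi.single a 1) -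
        W x a * fderiv 𝕜 (fun y => V y i) x (Pi.single a 1)) := by
  rw [fderiv_apply hV, fderiv_apply hW, Finset.sum_sub_distrib]
  simp [VectorField.lieBracket, sum_mul_apply_single]

variable {n : ℕ} {ε : (Fin n → ℝ) → (Fin n → ℝ) → Matrix (Fin n) (Fin n) ℝ}
  {U : Set (Fin n → ℝ)} {x : Fin n → ℝ}

/-- The operator-valued transport given by a matrix-valued splitting. -/
def splittingCLM (ε : (Fin n → ℝ) → (Fin n → ℝ) → Matrix (Fin n) (Fin n) ℝ)
    (x y : Fin n → ℝ) : (Fin n → ℝ) →L[ℝ] Fin n → ℝ :=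
  ⟨(ε x y).mulVecLin, by fun_prop⟩

theorem splittingCLM_apply (x y v : Fin n → ℝ) : splittingCLM ε x y v = (ε x y).mulVec v :=
  rfl

theorem splittingCLM_single_apply (x y : Fin n → ℝ) (i k : Fin n) :
    splittingCLM ε x y (Pi.single k 1) i = ε x y i k := by
  simp [splittingCLM_apply]

theorem isParallelismOn_splittingCLM
    (hsmooth : ∀ i k, ContDiffOn ℝ 2
      (fun q : (Fin n → ℝ) × (Fin n → ℝ) => ε q.1 q.2 i k) (U ×ˢ U))
    (hId : ∀ x ∈ U, ε x x = 1)
    (hCoc : ∀ x ∈ U, ∀ y ∈ U, ∀ z ∈ U, ε y z * ε x y = ε x z) :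
    IsParallelismOn ℝ (splittingCLM ε) U where
  contDiffOn := by
    refine contDiffOn_clm_apply.2 fun v => contDiffOn_pi.2 fun i => ?_
    simp only [splittingCLM_apply, Matrix.mulVec, dotProduct]
    exact ContDiffOn.sum fun k _ => (hsmooth i k).mul contDiffOn_const
  self_eq_id x hx := by
    ext v : 1
    simp [splittingCLM_apply, hId x hx]
  comp_eq x hx y hy z hz := by
    ext v : 1
    simp [splittingCLM_apply, hCoc x hx y hy z hz]

theorem Gamma_eq_christoffelForm_apply (hε : IsParallelismOn ℝ (splittingCLM ε) U)
    (hU : IsOpen U) (hx : x ∈ U) (i j k : Fin n) :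
    Gamma ε x i j k =
      christoffelForm (splittingCLM ε) x (Pi.single j 1) (Pi.single k 1) i := by
  have hεx := hε.differentiableAt_right hU hx hx
  simp only [Gamma, ← splittingCLM_single_apply]
  rw [fderiv_apply (hεx.clm_apply (differentiableAt_const _)), ContinuousLinearMap.comp_apply,
    fderiv_clm_apply_const_apply hεx]
  rfl

theorem fderiv_Gamma_apply (hε : IsParallelismOn ℝ (splittingCLM ε) U) (hU : IsOpen U)
    (hx : x ∈ U) (i j k : Fin n) (h : Fin n → ℝ) :
    fderiv ℝ (fun z => Gamma ε z i j k) x h =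
      fderiv ℝ (christoffelForm (splittingCLM ε)) x h (Pi.single j 1) (Pi.single k 1) i := by
  have hΓ := hε.differentiableAt_christoffelForm hU hx
  have hΓj := hΓ.clm_apply (differentiableAt_const (Pi.single j 1))
  have hGamma : (fun z => Gamma ε z i j k) =ᶠ[nhds x] fun z =>
      christoffelForm (splittingCLM ε) z (Pi.single j 1) (Pi.single k 1) i := by
    filter_upwards [hU.mem_nhds hx] with z hz using Gamma_eq_christoffelForm_apply hε hU hz i j k
  rw [hGamma.fderiv_eq, fderiv_apply (hΓj.clm_apply (differentiableAt_const _)),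
    ContinuousLinearMap.comp_apply, fderiv_clm_apply_const_apply hΓj,
    fderiv_clm_apply_const_apply hΓ]
  rfl

theorem sum_Gamma_mul_Gamma (hε : IsParallelismOn ℝ (splittingCLM ε) U) (hU : IsOpen U)
    (hx : x ∈ U) (i j k r : Fin n) :
    ∑ a, Gamma ε x a k r * Gamma ε x i a j =
      christoffelForm (splittingCLM ε) x
        (christoffelForm (splittingCLM ε) x (Pi.single k 1) (Pi.single r 1)) (Pi.single j 1) i := by
  simp only [Gamma_eq_christoffelForm_apply hε hU hx]
  exact sum_mul_apply_single ((christoffelForm (splittingCLM ε) x).flip (Pi.single j 1)) _ i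

theorem curvatureForm_splittingCLM_apply (hε : IsParallelismOn ℝ (splittingCLM ε) U)
    (hU : IsOpen U) (hx : x ∈ U) (i j k r : Fin n) :
    curvatureForm (splittingCLM ε) x (Pi.single k 1) (Pi.single r 1) (Pi.single j 1) i =
      fderiv ℝ (fun z => Gamma ε z i k j) x (Pi.single r 1) +
          (∑ a, Gamma ε x a k r * Gamma ε x i a j) -
        fderiv ℝ (fun z => Gamma ε z i k r) x (Pi.single j 1) -
          (∑ a, Gamma ε x a k j * Gamma ε x i a r) := by
  simp only [fderiv_Gamma_apply hε hU hx, sum_Gamma_mul_Gamma hε hU hx, curvatureForm_apply,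
    Pi.sub_apply, Pi.add_apply, sub_sub]

theorem curvatureForm_splittingCLM_eq_zero_iff (hε : IsParallelismOn ℝ (splittingCLM ε) U)
    (hU : IsOpen U) (hx : x ∈ U) :
    curvatureForm (splittingCLM ε) x = 0 ↔ ∀ i j k r : Fin n,
      fderiv ℝ (fun z => Gamma ε z i k j) x (Pi.single r 1) +
          (∑ a, Gamma ε x a k r * Gamma ε x i a j) -
        fderiv ℝ (fun z => Gamma ε z i k r) x (Pi.single j 1) -
          (∑ a, Gamma ε x a k j * Gamma ε x i a r) = 0 := by
  simp only [← curvatureForm_splittingCLM_apply hε hU hx, funext_iff,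
    continuousLinearMap_pi_eq_zero_iff, Pi.zero_apply]
  exact ⟨fun h i j k r => h k r j i, fun h k r j i => h i j k r⟩

theorem lieBracket_splittingCLM_eq_iff (hε : IsParallelismOn ℝ (splittingCLM ε) U)
    (hU : IsOpen U) {p : Fin n → ℝ} (hp : p ∈ U) (hx : x ∈ U) (u v w : Fin n → ℝ) :
    VectorField.lieBracket ℝ (fun y => splittingCLM ε p y v) (fun y => splittingCLM ε p y w) x =
        splittingCLM ε p x u ↔
      ∀ i, (∑ a, ((ε p x).mulVec v a *
            fderiv ℝ (fun y => (ε p y).mulVec w i) x (Pi.single a 1) -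
          (ε p x).mulVec w a *
            fderiv ℝ (fun y => (ε p y).mulVec v i) x (Pi.single a 1))) =
        (ε p x).mulVec u i := by
  rw [funext_iff]
  refine forall_congr' fun i => ?_
  rw [lieBracket_apply_eq_sum (hε.differentiableAt_invariant hU hp hx v)
    (hε.differentiableAt_invariant hU hp hx w)]
  simp only [splittingCLM_apply]

end Coordinates

/-- For a smooth splitting `ε` on an open connected set `U`, the curvature `R₂(ε)`
vanishes on `U` if and only if the `ε`-invariant vector fields `V_{p,v}(x) = ε(p,x)·v`
are closed under the Lie bracket
`[V,W]^i = ∑_a (V^a ∂W^i/∂x^a − W^a ∂V^i/∂x^a)`. -/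
theorem stmt_17 {n : ℕ} (U : Set (Fin n → ℝ)) (hU : IsOpen U) (hconn : IsConnected U)
    (ε : (Fin n → ℝ) → (Fin n → ℝ) → Matrix (Fin n) (Fin n) ℝ)
    (hsmooth : ∀ i k, ContDiffOn ℝ (⊤ : ℕ∞)
      (fun q : (Fin n → ℝ) × (Fin n → ℝ) => ε q.1 q.2 i k) (U ×ˢ U))
    (hunit : ∀ x ∈ U, ∀ y ∈ U, IsUnit (ε x y))
    (hId : ∀ x ∈ U, ε x x = 1)
    (hCoc : ∀ x ∈ U, ∀ y ∈ U, ∀ z ∈ U, ε y z * ε x y = ε x z) :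
    (∀ x ∈ U, ∀ i j k r : Fin n,
      fderiv ℝ (fun z => Gamma ε z i k j) x (Pi.single r 1) +
          (∑ a, Gamma ε x a k r * Gamma ε x i a j) -
        fderiv ℝ (fun z => Gamma ε z i k r) x (Pi.single j 1) -
          (∑ a, Gamma ε x a k j * Gamma ε x i a r) = 0) ↔
    (∀ p ∈ U, ∀ v w : Fin n → ℝ, ∃ u : Fin n → ℝ, ∀ x ∈ U, ∀ i : Fin n,
      (∑ a, ((ε p x).mulVec v a *
            fderiv ℝ (fun y => (ε p y).mulVec w i) x (Pi.single a 1) -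
          (ε p x).mulVec w a *
            fderiv ℝ (fun y => (ε p y).mulVec v i) x (Pi.single a 1))) =
        (ε p x).mulVec u i) := by
  have hε : IsParallelismOn ℝ (splittingCLM ε) U :=
    isParallelismOn_splittingCLM (fun i k => (hsmooth i k).of_le (by norm_cast)) hId hCoc
  calc
    _ ↔ ∀ x ∈ U, curvatureForm (splittingCLM ε) x = 0 :=
      forall₂_congr fun x hx => (curvatureForm_splittingCLM_eq_zero_iff hε hU hx).symm
    _ ↔ _ := stmt_17_general hU hconn.isPreconnected hε
    _ ↔ _ := forall₂_congr fun p hp => forall₂_congr fun v w => exists_congr fun u =>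
      forall₂_congr fun x hx => lieBracket_splittingCLM_eq_iff hε hU hp hx u v w
end
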